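/- Narcissistic-avaricious theorem (Theorem 9, existence form): for every ε ∈ [3/4, 1] and every liquid democracy game, the mixed profile z in which each agent i votes herself with probability p = (1 + √(4ε − 3))/2 and delegates with probability 1−p to some i* ∈ argmax_{j∈V} u_{ij} is an ε-Nash equilibrium with SW(z) ≥ (1−ε) · OPT. -/

import Mathlib

/-!
The argument compares the utility of every agent with `u i (istar i)`, the largest
utility she can have.

* No mixed profile gives agent `i` more than `u i (istar i)`, because her expected utility is an
  average of numbers at most that large (`util_le`).
* If agent `i` and agent `istar i` both choose `istar i`, then `istar i` is the guru of `i`. As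
  choices are independent, this event has probability `∏ l ∈ {i, istar i}, x l (istar i)`, so the
  utility of `i` is at least that product times `u i (istar i)` (`le_util`). In the
  narcissistic-avaricious profile the product is at least `p * (1 - p)`
  (`util_nazProfile_ge`; it is `1` when `istar i = i`).

For `p = (1 + √(4ε - 3)) / 2` one has `p * (1 - p) = 1 - ε`. Hence every agent gets at least
`(1 - ε) * u i (istar i)`, which is at least `1 - ε` times what she gets after any deviation, and
summing over agents gives the welfare bound.
-/

open Finset

/-- The guru of agent `i` under pure profile `s` (where `s i = some j` means `i`
delegates to `j`, with `s i = some i` meaning `i` votes herself, and `s i = none`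
meaning `i` abstains): follow delegation arcs for `n` steps; the endpoint is the
guru provided it votes itself. -/
def guru {n : ℕ} (s : Fin n → Option (Fin n)) (i : Fin n) : Option (Fin n) :=
  ((fun o => Option.bind o s)^[n] (some i)).bind
    (fun j => if s j = some j then some j else none)

/-- Utility of agent `i` in the pure profile `s`: `u i (g i)` if the guru exists, else `0`. -/
def pureUtil {n : ℕ} (u : Fin n → Fin n → ℝ) (s : Fin n → Option (Fin n)) (i : Fin n) : ℝ :=
  (guru s i).elim 0 (u i)

/-- A mixed strategy for a single agent: nonnegative, total probability at most one
(the residual probability is abstention). -/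
def IsStrat {n : ℕ} (y : Fin n → ℝ) : Prop := (∀ j, 0 ≤ y j) ∧ (∑ j, y j) ≤ 1

/-- A mixed strategy profile. -/
def IsMixed {n : ℕ} (x : Fin n → Fin n → ℝ) : Prop := ∀ i, IsStrat (x i)

/-- Probability that the independent randomization `x` produces the pure profile `s`. -/
def prob {n : ℕ} (x : Fin n → Fin n → ℝ) (s : Fin n → Option (Fin n)) : ℝ :=
  ∏ i, (s i).elim (1 - ∑ j, x i j) (x i)

/-- Expected utility of agent `i` under the mixed profile `x`. -/
def util {n : ℕ} (u x : Fin n → Fin n → ℝ) (i : Fin n) : ℝ :=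
  ∑ s : Fin n → Option (Fin n), prob x s * pureUtil u s i

/-- Expected social welfare of the mixed profile `x`. -/
def SW {n : ℕ} (u x : Fin n → Fin n → ℝ) : ℝ := ∑ i, util u x i

/-- The set of social-welfare values achievable by mixed profiles; `OPT` is its greatest element. -/
def SWvals {n : ℕ} (u : Fin n → Fin n → ℝ) : Set ℝ :=
  {w | ∃ x, IsMixed x ∧ w = SW u x}

/-- `x` is an `ε`-Nash equilibrium. -/
def EpsNash {n : ℕ} (u : Fin n → Fin n → ℝ) (ε : ℝ) (x : Fin n → Fin n → ℝ) : Prop :=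
  ∀ i y, IsStrat y → util u x i ≥ (1 - ε) * util u (Function.update x i y) i

/-- `x` is an (exact, mixed) Nash equilibrium. -/
def NashEq {n : ℕ} (u x : Fin n → Fin n → ℝ) : Prop :=
  ∀ i y, IsStrat y → util u x i ≥ util u (Function.update x i y) i

/-- The narcissistic-avaricious profile: each agent i votes herself with
probability p and delegates to istar i with probability 1 - p. -/
def nazProfile {n : ℕ} (p : ℝ) (istar : Fin n → Fin n) : Fin n → Fin n → ℝ :=
  fun i j => (if j = i then p else 0) + (if j = istar i then 1 - p else 0)

lemma sum_option_elim {n : ℕ} (y : Fin n → ℝ) :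
    ∑ o : Option (Fin n), o.elim (1 - ∑ j, y j) y = 1 := by
  simp [Fintype.sum_option]

/-- Independence: the expectation of a product of functions of the individual choices factors. -/
lemma sum_prob_mul_prod {n : ℕ} (x : Fin n → Fin n → ℝ) (h : Fin n → Option (Fin n) → ℝ) :
    ∑ s, prob x s * ∏ l, h l (s l) =
      ∏ l, ∑ o : Option (Fin n), o.elim (1 - ∑ j, x l j) (x l) * h l o := by
  rw [Finset.prod_univ_sum, Fintype.piFinset_univ]
  simp only [prob, Finset.prod_mul_distrib]

lemma sum_prob {n : ℕ} (x : Fin n → Fin n → ℝ) : ∑ s, prob x s = 1 := by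
  have h := sum_prob_mul_prod x (fun _ _ => 1)
  simpa only [Finset.prod_const_one, mul_one, sum_option_elim] using h

lemma prob_nonneg {n : ℕ} {x : Fin n → Fin n → ℝ} (hx : IsMixed x)
    (s : Fin n → Option (Fin n)) : 0 ≤ prob x s := by
  refine Finset.prod_nonneg fun i _ => ?_
  cases s i with
  | none => exact sub_nonneg.2 (hx i).2
  | some j => exact (hx i).1 j

lemma pureUtil_nonneg {n : ℕ} {u : Fin n → Fin n → ℝ} (hu : ∀ i j, 0 ≤ u i j)
    (s : Fin n → Option (Fin n)) (i : Fin n) : 0 ≤ pureUtil u s i := by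
  unfold pureUtil
  cases guru s i with
  | none => exact le_rfl
  | some j => exact hu i j

lemma util_le {n : ℕ} {u x : Fin n → Fin n → ℝ} (hx : IsMixed x) {i : Fin n} {c : ℝ}
    (hc : 0 ≤ c) (huc : ∀ j, u i j ≤ c) : util u x i ≤ c := by
  have hp : ∀ s, pureUtil u s i ≤ c := by
    intro s
    unfold pureUtil
    cases guru s i with
    | none => exact hc
    | some j => exact huc j
  calc util u x i ≤ ∑ s, prob x s * c :=
        Finset.sum_le_sum fun s _ => mul_le_mul_of_nonneg_left (hp s) (prob_nonneg hx s)
    _ = c := by rw [← Finset.sum_mul, sum_prob, one_mul]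

lemma guru_eq_of_choose {n : ℕ} {s : Fin n → Option (Fin n)} {i k : Fin n}
    (hi : s i = some k) (hk : s k = some k) : guru s i = some k := by
  have hfix : ∀ m, (fun o => Option.bind o s)^[m] (some k) = some k := fun m =>
    Function.iterate_fixed (by simpa using hk) m
  have hiter : (fun o => Option.bind o s)^[n] (some i) = some k := by
    have hpos : n - 1 + 1 = n := Nat.sub_add_cancel i.pos
    have hstep : (fun o => Option.bind o s)^[n - 1 + 1] (some i) = some k := by
      rw [Function.iterate_succ_apply]
      simpa [hi] using hfix (n - 1)
    exact (congrArg (fun m => (fun o => Option.bind o s)^[m] (some i)) hpos).symm.trans hstep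
  unfold guru
  rw [hiter]
  simp [hk]

/-- The event that `i` and `k` both choose `k` makes `k` the guru of `i`. Writing it with the
finset `{i, k}` also covers the case `i = k`. -/
lemma le_util {n : ℕ} {u x : Fin n → Fin n → ℝ} (hx : IsMixed x) (hu : ∀ i j, 0 ≤ u i j)
    (i k : Fin n) : (∏ l ∈ ({i, k} : Finset (Fin n)), x l k) * u i k ≤ util u x i := by
  -- The product of the `h l (s l)` is the indicator of that event.
  let h : Fin n → Option (Fin n) → ℝ := fun l o =>
    if l ∈ ({i, k} : Finset (Fin n)) then (if o = some k then 1 else 0) else 1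
  have hprod : ∏ l, ∑ o : Option (Fin n), o.elim (1 - ∑ j, x l j) (x l) * h l o
      = ∏ l ∈ ({i, k} : Finset (Fin n)), x l k := by
    rw [← Finset.prod_subset (Finset.subset_univ ({i, k} : Finset (Fin n)))]
    · refine Finset.prod_congr rfl fun l hl => ?_
      simp only [h, if_pos hl]
      simp
    · intro l _ hl
      simp only [h, if_neg hl, mul_one]
      exact sum_option_elim (x l)
  have hpt : ∀ s : Fin n → Option (Fin n), (∏ l, h l (s l)) * u i k ≤ pureUtil u s i := by
    intro s
    by_cases hs : s i = some k ∧ s k = some k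
    · have hone : ∏ l, h l (s l) = 1 := by
        refine Finset.prod_eq_one fun l _ => ?_
        by_cases hl : l ∈ ({i, k} : Finset (Fin n))
        · have : s l = some k := by
            rcases Finset.mem_insert.1 hl with rfl | hl
            · exact hs.1
            · rw [Finset.mem_singleton.1 hl]
              exact hs.2
          simp only [h, if_pos hl, if_pos this]
        · simp only [h, if_neg hl]
      rw [hone, one_mul, pureUtil, guru_eq_of_choose hs.1 hs.2]
      exact le_rfl
    · have hzero : ∏ l, h l (s l) = 0 := by
        rcases not_and_or.1 hs with hi | hk
        · exact Finset.prod_eq_zero (Finset.mem_univ i) (by simp [h, hi])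
        · exact Finset.prod_eq_zero (Finset.mem_univ k) (by simp [h, hk])
      rw [hzero, zero_mul]
      exact pureUtil_nonneg hu s i
  calc (∏ l ∈ ({i, k} : Finset (Fin n)), x l k) * u i k
      = ∑ s, prob x s * ((∏ l, h l (s l)) * u i k) := by
        rw [← hprod, ← sum_prob_mul_prod, Finset.sum_mul]
        simp only [mul_assoc]
    _ ≤ util u x i :=
        Finset.sum_le_sum fun s _ => mul_le_mul_of_nonneg_left (hpt s) (prob_nonneg hx s)

lemma isMixed_nazProfile {n : ℕ} {p : ℝ} (hp0 : 0 ≤ p) (hp1 : p ≤ 1) (istar : Fin n → Fin n) :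
    IsMixed (nazProfile p istar) := by
  intro i
  refine ⟨fun j => ?_, ?_⟩
  · have : 0 ≤ 1 - p := sub_nonneg.2 hp1
    unfold nazProfile
    positivity
  · simp [nazProfile, Finset.sum_add_distrib]

lemma util_nazProfile_ge {n : ℕ} {p : ℝ} (hp0 : 0 ≤ p) (hp1 : p ≤ 1)
    {u : Fin n → Fin n → ℝ} (hu : ∀ i j, 0 ≤ u i j) (istar : Fin n → Fin n) (i : Fin n) :
    p * (1 - p) * u i (istar i) ≤ util u (nazProfile p istar) i := by
  refine le_trans (mul_le_mul_of_nonneg_right ?_ (hu i _))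
    (le_util (isMixed_nazProfile hp0 hp1 istar) hu i (istar i))
  by_cases hi : istar i = i
  · -- Voting and delegating coincide for `i`, so she votes with probability `p + (1 - p) = 1`.
    simp only [hi, Finset.pair_eq_singleton, Finset.prod_singleton, nazProfile, if_true]
    nlinarith
  · rw [Finset.prod_pair (Ne.symm hi)]
    have hk : p ≤ nazProfile p istar (istar i) (istar i) := by
      rw [nazProfile, if_pos rfl]
      split_ifs <;> linarith
    have hii : nazProfile p istar i (istar i) = 1 - p := by
      simp [nazProfile, hi]
    rw [hii, mul_comm]
    exact mul_le_mul_of_nonneg_left hk (sub_nonneg.2 hp1)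

/-- Narcissistic-avaricious theorem: for ε ∈ [3/4, 1], the profile in which every
agent votes herself with probability p = (1 + √(4ε-3))/2 and delegates to a
myopically best agent i* with probability 1-p is an ε-Nash equilibrium with
SW ≥ (1-ε)·OPT. -/
theorem stmt17 {n : ℕ} (ε : ℝ) (hε : ε ∈ Set.Icc (3/4 : ℝ) 1)
    (u : Fin n → Fin n → ℝ) (hu : ∀ i j, 0 ≤ u i j ∧ u i j ≤ 1)
    (istar : Fin n → Fin n) (histar : ∀ i j, u i j ≤ u i (istar i))
    (OPT : ℝ) (hOPT : IsGreatest (SWvals u) OPT) :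
    EpsNash u ε (nazProfile ((1 + Real.sqrt (4*ε - 3))/2) istar) ∧
    SW u (nazProfile ((1 + Real.sqrt (4*ε - 3))/2) istar) ≥ (1-ε) * OPT := by
  obtain ⟨hε0, hε1⟩ := hε
  have hu0 : ∀ i j, 0 ≤ u i j := fun i j => (hu i j).1
  set p : ℝ := (1 + Real.sqrt (4*ε - 3))/2 with hp
  have hr0 : 0 ≤ Real.sqrt (4*ε - 3) := Real.sqrt_nonneg _
  have hr1 : Real.sqrt (4*ε - 3) ≤ 1 := Real.sqrt_le_one.2 (by linarith)
  have hrr : Real.sqrt (4*ε - 3) * Real.sqrt (4*ε - 3) = 4*ε - 3 :=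
    Real.mul_self_sqrt (by linarith)
  have hp0 : 0 ≤ p := by rw [hp]; linarith
  have hp1 : p ≤ 1 := by rw [hp]; linarith
  have hpp : p * (1 - p) = 1 - ε := by rw [hp]; linear_combination (-1/4) * hrr
  have hmixed := isMixed_nazProfile hp0 hp1 istar
  have hlow : ∀ i, (1 - ε) * u i (istar i) ≤ util u (nazProfile p istar) i := fun i =>
    hpp ▸ util_nazProfile_ge hp0 hp1 hu0 istar i
  have hkey : ∀ i x, IsMixed x → (1 - ε) * util u x i ≤ util u (nazProfile p istar) i :=
    fun i x hx => (mul_le_mul_of_nonneg_left (util_le hx (hu0 i _) (histar i))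
      (sub_nonneg.2 hε1)).trans (hlow i)
  refine ⟨fun i y hy => hkey i _ fun l => ?_, ?_⟩
  · by_cases hl : l = i
    · subst hl
      simpa using hy
    · simpa [Function.update_of_ne hl] using hmixed l
  · obtain ⟨x, hx, rfl⟩ := hOPT.1
    unfold SW
    rw [ge_iff_le, Finset.mul_sum]
    exact Finset.sum_le_sum fun i _ => hkey i x hx
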